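/- Let G be a group acting by homeomorphisms on a compact metric space X, with the action faithful, and let H be a subgroup of G of finite index such that the restricted action of H on X is chaotic almost minimal. Then the action of G on X is chaotic almost minimal. -/

import Mathlib

/-!
Orbits of `H` are contained in orbits of `G`, and `G`-invariant sets are `H`-invariant, so only the
density of the points with finite orbit uses the finite index. If the `H`-orbit of `x` is finite,
then by the orbit-stabilizer theorem the stabilizer of `x` in `H` has finite index in `H`, hence in
`G`. So does the larger stabilizer of `x` in `G`, and the `G`-orbit of `x` is finite.
-/

open Set MeasureTheory

instance homeomorphGroup {X : Type*} [TopologicalSpace X] : Group (X ≃ₜ X) where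
  mul f g := g.trans f
  one := Homeomorph.refl X
  inv f := f.symm
  mul_assoc f g h := Homeomorph.ext fun _ => rfl
  one_mul f := Homeomorph.ext fun _ => rfl
  mul_one f := Homeomorph.ext fun _ => rfl
  inv_mul_cancel f := Homeomorph.ext fun x => f.symm_apply_apply x

def shiftHomeo (A : Type*) [TopologicalSpace A] : (ℤ → A) ≃ₜ (ℤ → A) where
  toFun x := fun n => x (n + 1)
  invFun x := fun n => x (n - 1)
  left_inv x := funext fun n => by simp
  right_inv x := funext fun n => by simp
  continuous_toFun := continuous_pi fun n => continuous_apply (n + 1)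
  continuous_invFun := continuous_pi fun n => continuous_apply (n - 1)

def restrictHomeo {X : Type*} [TopologicalSpace X] (e : X ≃ₜ X) (s : Set X)
    (h : ∀ x, x ∈ s ↔ e x ∈ s) : s ≃ₜ s where
  toEquiv := e.toEquiv.subtypeEquiv h
  continuous_toFun := by
    exact Continuous.subtype_mk (e.continuous.comp continuous_subtype_val) _
  continuous_invFun := by
    exact Continuous.subtype_mk (e.symm.continuous.comp continuous_subtype_val) _

def IsCAMZ {X : Type*} [TopologicalSpace X] (T : X ≃ₜ X) : Prop :=
  (∀ n : ℤ, n ≠ 0 → T ^ n ≠ 1) ∧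
  (∀ U V : Set X, IsOpen U → IsOpen V → U.Nonempty → V.Nonempty →
      ∃ n : ℤ, ((T ^ n) '' U ∩ V).Nonempty) ∧
  Dense {x : X | ∃ k : ℕ, 0 < k ∧ (T ^ k) x = x} ∧
  ∀ A : Set X, IsClosed A → T '' A = A → A ≠ Set.univ → A.Finite

def IsCAM {G X : Type*} [Group G] [TopologicalSpace X] (T : G →* (X ≃ₜ X)) : Prop :=
  Function.Injective T ∧
  (∀ U V : Set X, IsOpen U → IsOpen V → U.Nonempty → V.Nonempty →
      ∃ g : G, ((T g) '' U ∩ V).Nonempty) ∧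
  Dense {x : X | (Set.range fun g : G => T g x).Finite} ∧
  ∀ A : Set X, IsClosed A → (∀ g : G, T g '' A = A) → A ≠ Set.univ → A.Finite

theorem finite_orbit_of_finite_orbit_subgroup {G α : Type*} [Group G] [MulAction G α]
    (H : Subgroup G) [H.FiniteIndex] {a : α} (ha : (MulAction.orbit H a).Finite) :
    (MulAction.orbit G a).Finite := by
  have hstabH : (MulAction.stabilizer G a).relIndex H ≠ 0 := by
    change (MulAction.stabilizer H a).index ≠ 0
    rw [MulAction.index_stabilizer]
    exact ((MulAction.nonempty_orbit a).ncard_pos ha).ne'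
  have hH : H.relIndex ⊤ ≠ 0 := by
    rw [Subgroup.relIndex_top_right]
    exact Subgroup.FiniteIndex.index_ne_zero
  have hstabG : (MulAction.stabilizer G a).relIndex ⊤ ≠ 0 :=
    Subgroup.relIndex_ne_zero_trans hstabH hH
  rw [Subgroup.relIndex_top_right, MulAction.index_stabilizer] at hstabG
  exact Set.finite_of_ncard_ne_zero hstabG

/-- The action `g • x = T g x` of `G` on `X` given by a homomorphism `T` to the homeomorphism group
of `X`; a definition rather than an instance, since it depends on `T`. -/
abbrev homeomorphAction {G X : Type*} [Group G] [TopologicalSpace X] (T : G →* (X ≃ₜ X)) :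
    MulAction G X where
  smul g x := T g x
  one_smul x := congrArg (· x) T.map_one
  mul_smul g h x := congrArg (· x) (T.map_mul g h)

theorem finite_range_apply_of_finite_range_comp_subtype {G X : Type*} [Group G]
    [TopologicalSpace X] (T : G →* (X ≃ₜ X)) (H : Subgroup G) [H.FiniteIndex] {x : X}
    (hx : (Set.range fun h : H => (T.comp H.subtype) h x).Finite) :
    (Set.range fun g : G => T g x).Finite :=
  letI := homeomorphAction T
  finite_orbit_of_finite_orbit_subgroup H hx

theorem statement18_general {G X : Type*} [Group G] [TopologicalSpace X]
    (T : G →* (X ≃ₜ X)) (hfaith : Function.Injective T) (H : Subgroup G) [H.FiniteIndex]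
    (hcamH : IsCAM (T.comp H.subtype)) : IsCAM T := by
  obtain ⟨-, htrans, hdense, hfinite⟩ := hcamH
  refine ⟨hfaith, fun U V hU hV hU' hV' => ?transitive, ?dense, fun A hA hinv hne => ?finite⟩
  case transitive =>
    obtain ⟨h, hUV⟩ := htrans U V hU hV hU' hV'
    exact ⟨h, hUV⟩
  case dense =>
    exact hdense.mono fun x hx => finite_range_apply_of_finite_range_comp_subtype T H hx
  case finite =>
    exact hfinite A hA (fun h => hinv h) hne

/-- If a group `G` acts faithfully by homeomorphisms on a compact metric
space `X` and a finite-index subgroup `H` of `G` acts chaotic almost minimally on `X`,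
then the `G`-action on `X` is chaotic almost minimal. -/
theorem statement18 {G X : Type*} [Group G] [MetricSpace X] [CompactSpace X]
    (T : G →* (X ≃ₜ X)) (hfaith : Function.Injective T)
    (H : Subgroup G) (hfin : H.FiniteIndex)
    (hcamH : IsCAM (T.comp H.subtype)) :
    IsCAM T := by
  exact statement18_general T hfaith H hcamH
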